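/- If 𝒜 is a σ-algebra, λ is countably additive, and φ is a continuous linear functional on L⁰(λ), then either φ=0 or λ has an atom, i.e. a set A∈𝒜 with |λ|(A)>0 such that every B∈𝒜 with B⊆A satisfies |λ|(B)=0 or |λ|(A∖B)=0. -/

import Mathlib

open Set Filter Topology

namespace FA

/-- An algebra of subsets of `Ω`. -/
structure SetAlg (Ω : Type*) where
  sets : Set (Set Ω)
  empty_mem : ∅ ∈ sets
  compl_mem : ∀ ⦃A⦄, A ∈ sets → Aᶜ ∈ sets
  union_mem : ∀ ⦃A B⦄, A ∈ sets → B ∈ sets → A ∪ B ∈ sets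

/-- A bounded, finitely additive real-valued set function on the algebra `𝒜`,
i.e. an element of `ba(𝒜)`. -/
structure BAMeasure {Ω : Type*} (𝒜 : SetAlg Ω) where
  toFun : Set Ω → ℝ
  map_empty : toFun ∅ = 0
  additive : ∀ ⦃A B : Set Ω⦄, A ∈ 𝒜.sets → B ∈ 𝒜.sets → Disjoint A B →
      toFun (A ∪ B) = toFun A + toFun B
  bounded : ∃ M : ℝ, ∀ A ∈ 𝒜.sets, |toFun A| ≤ M

variable {Ω : Type*} {𝒜 : SetAlg Ω}

/-- Total variation `|λ|(A) = λ⁺(A) + λ⁻(A)`. -/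
noncomputable def var (lam : BAMeasure 𝒜) (A : Set Ω) : ℝ :=
  sSup {x | ∃ B ∈ 𝒜.sets, B ⊆ A ∧ x = lam.toFun B} +
  sSup {x | ∃ B ∈ 𝒜.sets, B ⊆ A ∧ x = -lam.toFun B}

/-- The outer measure `|λ|*(B) = inf {|λ|(A) : A ∈ 𝒜, B ⊆ A}`. -/
noncomputable def outer (lam : BAMeasure 𝒜) (B : Set Ω) : ℝ :=
  sInf {x | ∃ A ∈ 𝒜.sets, B ⊆ A ∧ x = var lam A}

/-- `𝒜`-simple functions. -/
def IsSimple (𝒜 : SetAlg Ω) (f : Ω → ℝ) : Prop :=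
  (Set.range f).Finite ∧ ∀ r : ℝ, f ⁻¹' {r} ∈ 𝒜.sets

/-- `λ`-convergence: `(f n)` converges to `g` in `λ`-measure. -/
def LConv (lam : BAMeasure 𝒜) (f : ℕ → Ω → ℝ) (g : Ω → ℝ) : Prop :=
  ∀ c > (0:ℝ), Tendsto (fun n => outer lam {ω | c < |f n ω - g ω|}) atTop (𝓝 0)

/-- `λ`-Cauchy sequences. -/
def LCauchy (lam : BAMeasure 𝒜) (f : ℕ → Ω → ℝ) : Prop :=
  ∀ c > (0:ℝ), ∀ ε > (0:ℝ), ∃ N : ℕ, ∀ p q : ℕ,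
    outer lam {ω | c < |f (N + p) ω - f (N + q) ω|} < ε

/-- `L⁰(λ)`: `λ`-limits of sequences of `𝒜`-simple functions. -/
def L0 (lam : BAMeasure 𝒜) : Set (Ω → ℝ) :=
  {f | ∃ s : ℕ → Ω → ℝ, (∀ n, IsSimple 𝒜 (s n)) ∧ LConv lam s f}

/-- The metric of `L⁰(λ)`: `d(f,g) = inf {c + |λ|*(|f-g| ≥ c) : c > 0}`. -/
noncomputable def dL0 (lam : BAMeasure 𝒜) (f g : Ω → ℝ) : ℝ :=
  sInf {x | ∃ c > (0:ℝ), x = c + outer lam {ω | c ≤ |f ω - g ω|}}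

/-- A set `K` is bounded in `L⁰(λ)` if `lim_{c→∞} sup_{f∈K} |λ|*(|f|>c) = 0`. -/
def BddL0 (lam : BAMeasure 𝒜) (K : Set (Ω → ℝ)) : Prop :=
  ∀ ε > (0:ℝ), ∃ c₀ : ℝ, ∀ c ≥ c₀, ∀ f ∈ K, outer lam {ω | c < |f ω|} < ε

/-- The nonnegative elements of `L⁰(λ)`. -/
def L0pos (lam : BAMeasure 𝒜) : Set (Ω → ℝ) := {f ∈ L0 lam | ∀ ω, 0 ≤ f ω}

/-- The elementary integral of a simple function with respect to a set function. -/
noncomputable def simpleIntegral (m : Set Ω → ℝ) (f : Ω → ℝ) : ℝ :=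
  ∑ᶠ r : ℝ, r * m (f ⁻¹' {r})

/-- Dunford–Schwartz integrability: there is a sequence of simple functions converging to `f`
in `λ`-measure which is Cauchy in mean. -/
def MemL1 (lam : BAMeasure 𝒜) (f : Ω → ℝ) : Prop :=
  ∃ s : ℕ → Ω → ℝ, (∀ n, IsSimple 𝒜 (s n)) ∧ LConv lam s f ∧
    ∀ ε > (0:ℝ), ∃ N : ℕ, ∀ m ≥ N, ∀ n ≥ N,
      simpleIntegral (var lam) (fun ω => |s m ω - s n ω|) < ε

/-- `L¹(λ)`. -/
def L1 (lam : BAMeasure 𝒜) : Set (Ω → ℝ) := {f | MemL1 lam f}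

open scoped Classical in
/-- The Dunford–Schwartz integral `∫ f dλ`. -/
noncomputable def integral (lam : BAMeasure 𝒜) (f : Ω → ℝ) : ℝ :=
  if h : MemL1 lam f then
    limUnder atTop (fun n => simpleIntegral lam.toFun (h.choose n))
  else 0

open scoped Classical in
/-- The `L¹(λ)` seminorm `∫ |f| d|λ|`. -/
noncomputable def l1Norm (lam : BAMeasure 𝒜) (f : Ω → ℝ) : ℝ :=
  if h : MemL1 lam f then
    limUnder atTop (fun n => simpleIntegral (var lam) (fun ω => |h.choose n ω|))
  else 0

/-- A set is bounded in `L¹(μ)` if the integrals `∫|f| d|μ|` are uniformly bounded. -/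
def BddL1 (mu : BAMeasure 𝒜) (K : Set (Ω → ℝ)) : Prop :=
  ∃ M : ℝ, ∀ f ∈ K, l1Norm mu f ≤ M

/-- Finitely additive probability measures. -/
def IsFAProb (mu : BAMeasure 𝒜) : Prop :=
  mu.toFun Set.univ = 1 ∧ ∀ A ∈ 𝒜.sets, 0 ≤ mu.toFun A

/-- `μ ∈ 𝔓_*(λ)`: a finitely additive probability with `|μ| ≤ c |λ|` and the same null
sets as `λ`. -/
def PStar (lam mu : BAMeasure 𝒜) : Prop :=
  IsFAProb mu ∧ (∃ c : ℝ, 0 ≤ c ∧ ∀ A ∈ 𝒜.sets, var mu A ≤ c * var lam A) ∧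
  ∀ A ∈ 𝒜.sets, (mu.toFun A = 0 ↔ var lam A = 0)

/-- `μ ∈ 𝔓_*(λ; K)`. -/
def PStarWith (lam : BAMeasure 𝒜) (K : Set (Ω → ℝ)) (mu : BAMeasure 𝒜) : Prop :=
  PStar lam mu ∧ K ⊆ L1 mu ∧ BddL1 mu K

/-- `f` is a `λ`-a.s. lower bound of `K`. -/
def ASLowerBound (lam : BAMeasure 𝒜) (f : Ω → ℝ) (K : Set (Ω → ℝ)) : Prop :=
  ∀ c > (0:ℝ), ∀ k ∈ K, outer lam {ω | k ω < f ω - c} = 0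

/-- Absolute continuity `μ ≪ λ` for bounded finitely additive set functions. -/
def AbsCont (mu lam : BAMeasure 𝒜) : Prop :=
  ∀ ε > (0:ℝ), ∃ δ > (0:ℝ), ∀ A ∈ 𝒜.sets, var lam A < δ → var mu A < ε

/-- `λ ∈ ba₀(𝒜)`: the range of `λ` is finite. -/
def FiniteRange (lam : BAMeasure 𝒜) : Prop := (lam.toFun '' 𝒜.sets).Finite

/-- `μ ∈ ba₀(λ)`. -/
def BA0rel (lam mu : BAMeasure 𝒜) : Prop := FiniteRange mu ∧ AbsCont mu lam

/-- Strong continuity: arbitrarily fine finite partitions. -/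
def StronglyContinuous (lam : BAMeasure 𝒜) : Prop :=
  ∀ ε > (0:ℝ), ∃ (N : ℕ) (A : Fin N → Set Ω), (∀ n, A n ∈ 𝒜.sets) ∧
    Pairwise (Function.onFun Disjoint A) ∧ (⋃ n, A n) = Set.univ ∧
    ∀ n, var lam (A n) < ε

/-- Orthogonality of bounded finitely additive set functions. -/
def Orthogonal (mu nu : BAMeasure 𝒜) : Prop :=
  ∀ ε > (0:ℝ), ∃ A ∈ 𝒜.sets, var mu A < ε ∧ var nu Aᶜ < ε

/-- Strong discontinuity: orthogonal to every strongly continuous element of `ba(𝒜)`. -/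
def StronglyDiscontinuous (mu : BAMeasure 𝒜) : Prop :=
  ∀ nu : BAMeasure 𝒜, StronglyContinuous nu → Orthogonal mu nu

/-- Countable additivity of `λ` on the algebra `𝒜`. -/
def CountablyAdditive (lam : BAMeasure 𝒜) : Prop :=
  ∀ A : ℕ → Set Ω, (∀ n, A n ∈ 𝒜.sets) → Pairwise (Function.onFun Disjoint A) →
    (⋃ n, A n) ∈ 𝒜.sets → HasSum (fun n => lam.toFun (A n)) (lam.toFun (⋃ n, A n))

/-- `𝒜` is a σ-algebra. -/
def IsSigmaAlg (𝒜 : SetAlg Ω) : Prop :=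
  ∀ A : ℕ → Set Ω, (∀ n, A n ∈ 𝒜.sets) → (⋃ n, A n) ∈ 𝒜.sets

/-- Linearity of a functional on `L⁰(λ)`. -/
def LinearOnL0 (lam : BAMeasure 𝒜) (φ : (Ω → ℝ) → ℝ) : Prop :=
  (∀ f ∈ L0 lam, ∀ g ∈ L0 lam, φ (f + g) = φ f + φ g) ∧
  (∀ a : ℝ, ∀ f ∈ L0 lam, φ (a • f) = a * φ f)

/-- Continuity of a functional on `L⁰(λ)` with respect to the metric `d`. -/
def ContinuousOnL0 (lam : BAMeasure 𝒜) (φ : (Ω → ℝ) → ℝ) : Prop :=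
  ∀ f ∈ L0 lam, ∀ ε > (0:ℝ), ∃ δ > (0:ℝ), ∀ g ∈ L0 lam, dL0 lam g f < δ → |φ g - φ f| < ε


/-! ### Helper lemmas -/

theorem SetAlg.inter_mem {Ω : Type*} (𝒜 : SetAlg Ω) {A B : Set Ω} (hA : A ∈ 𝒜.sets)
    (hB : B ∈ 𝒜.sets) : A ∩ B ∈ 𝒜.sets := by
  have := 𝒜.compl_mem (𝒜.union_mem (𝒜.compl_mem hA) (𝒜.compl_mem hB))
  simpa [Set.compl_union] using this

theorem SetAlg.diff_mem {Ω : Type*} (𝒜 : SetAlg Ω) {A B : Set Ω} (hA : A ∈ 𝒜.sets)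
    (hB : B ∈ 𝒜.sets) : A \ B ∈ 𝒜.sets :=
  𝒜.inter_mem hA (𝒜.compl_mem hB)

theorem SetAlg.univ_mem {Ω : Type*} (𝒜 : SetAlg Ω) : (Set.univ : Set Ω) ∈ 𝒜.sets := by
  simpa using 𝒜.compl_mem 𝒜.empty_mem

/-- The negative of `m`. -/
def negM {Ω : Type*} {𝒜 : SetAlg Ω} (m : BAMeasure 𝒜) : BAMeasure 𝒜 where
  toFun A := -m.toFun A
  map_empty := by simp [m.map_empty]
  additive := by
    intro A B hA hB h
    rw [m.additive hA hB h]; ring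
  bounded := by
    obtain ⟨M, hM⟩ := m.bounded
    exact ⟨M, fun A hA => by simpa using hM A hA⟩

/-- The positive part of `m`. -/
noncomputable def posP {Ω : Type*} {𝒜 : SetAlg Ω} (m : BAMeasure 𝒜) (A : Set Ω) : ℝ :=
  sSup {x | ∃ B ∈ 𝒜.sets, B ⊆ A ∧ x = m.toFun B}

theorem var_eq {Ω : Type*} {𝒜 : SetAlg Ω} (m : BAMeasure 𝒜) (A : Set Ω) :
    var m A = posP m A + posP (negM m) A := rfl

section P
variable {Ω : Type*} {𝒜 : SetAlg Ω} (m : BAMeasure 𝒜)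

theorem le_posP {A B : Set Ω} (hB : B ∈ 𝒜.sets) (h : B ⊆ A) : m.toFun B ≤ posP m A := by
  apply le_csSup
  · obtain ⟨M, hM⟩ := m.bounded
    refine ⟨M, ?_⟩
    rintro x ⟨C, hC, -, rfl⟩
    exact (le_abs_self _).trans (hM C hC)
  · exact ⟨B, hB, h, rfl⟩

theorem posP_le {A : Set Ω} {c : ℝ} (h : ∀ B ∈ 𝒜.sets, B ⊆ A → m.toFun B ≤ c) :
    posP m A ≤ c := by
  apply csSup_le
  · exact ⟨m.toFun ∅, ∅, 𝒜.empty_mem, Set.empty_subset _, rfl⟩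
  · rintro x ⟨C, hC, hs, rfl⟩
    exact h C hC hs

theorem posP_nonneg (A : Set Ω) : 0 ≤ posP m A := by
  have := le_posP m 𝒜.empty_mem (Set.empty_subset A)
  rwa [m.map_empty] at this

theorem posP_mono {A B : Set Ω} (h : A ⊆ B) : posP m A ≤ posP m B :=
  posP_le m fun _ hC hs => le_posP m hC (hs.trans h)

theorem posP_union {A B : Set Ω} (hA : A ∈ 𝒜.sets) (hB : B ∈ 𝒜.sets) (hd : Disjoint A B) :
    posP m (A ∪ B) = posP m A + posP m B := by
  apply le_antisymm
  · apply posP_le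
    intro C hC hs
    have h1 : C = (C ∩ A) ∪ (C ∩ B) := by
      rw [← Set.inter_union_distrib_left, Set.inter_eq_left.2 hs]
    rw [h1, m.additive (𝒜.inter_mem hC hA) (𝒜.inter_mem hC hB)
      (hd.mono Set.inter_subset_right Set.inter_subset_right)]
    exact add_le_add (le_posP m (𝒜.inter_mem hC hA) Set.inter_subset_right)
      (le_posP m (𝒜.inter_mem hC hB) Set.inter_subset_right)
  · rw [← le_sub_iff_add_le]
    apply posP_le
    intro C hC hCA
    rw [le_sub_comm]
    apply posP_le
    intro D hD hDB
    have := le_posP m (𝒜.union_mem hC hD) (Set.union_subset_union hCA hDB)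
    rw [m.additive hC hD (hd.mono hCA hDB)] at this
    linarith

theorem posP_tendsto (hσ : IsSigmaAlg 𝒜) (hca : CountablyAdditive m) (D : ℕ → Set Ω)
    (hD : ∀ n, D n ∈ 𝒜.sets) (hanti : Antitone D) (hemp : ⋂ n, D n = ∅) :
    Tendsto (fun n => posP m (D n)) atTop (𝓝 0) := by
  set E : ℕ → Set Ω := fun n => D n \ D (n + 1) with hE
  have hEm : ∀ n, E n ∈ 𝒜.sets := fun n => 𝒜.diff_mem (hD n) (hD _)
  have hEd : Pairwise (Function.onFun Disjoint E) := by
    have key : ∀ i j, i < j → Disjoint (E i) (E j) := by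
      intro i j hij
      rw [Set.disjoint_left]
      rintro x ⟨-, hx⟩ ⟨hx', -⟩
      exact hx (hanti (show i + 1 ≤ j from hij) hx')
    intro i j hij
    rcases lt_or_gt_of_ne hij with h | h
    · exact key i j h
    · exact (key j i h).symm
  have hstep : ∀ n, posP m (D n) = posP m (E n) + posP m (D (n + 1)) := by
    intro n
    rw [← posP_union m (hEm n) (hD _) Set.disjoint_sdiff_left,
      Set.diff_union_of_subset (hanti (Nat.le_succ n))]
  have hsumle : ∀ n, ∑ i ∈ Finset.range n, posP m (E i) = posP m (D 0) - posP m (D n) := by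
    intro n
    induction n with
    | zero => simp
    | succ k ih => rw [Finset.sum_range_succ, ih, hstep k]; ring
  have hsm : Summable fun n => posP m (E n) := by
    apply summable_of_sum_range_le (c := posP m (D 0)) (fun n => posP_nonneg m _)
    intro n
    rw [hsumle]
    linarith [posP_nonneg m (D n)]
  have hDU : ∀ n, D n = ⋃ k, E (k + n) := by
    intro n
    apply Set.Subset.antisymm
    · intro x hx
      by_contra hcon
      simp only [Set.mem_iUnion, not_exists] at hcon
      have : ∀ k, x ∈ D (k + n) := by
        intro k
        induction k with
        | zero => simpa using hx
        | succ k ih =>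
          by_contra h
          exact hcon k ⟨ih, by rwa [show k + n + 1 = k + 1 + n by omega]⟩
      have hx' : x ∈ ⋂ n, D n :=
        Set.mem_iInter.2 fun k => hanti (Nat.le_add_right k n) (this k)
      rw [hemp] at hx'
      exact hx'
    · exact Set.iUnion_subset fun k => Set.diff_subset.trans (hanti (Nat.le_add_left n k))
  refine squeeze_zero (fun n => posP_nonneg m _) ?_ (tendsto_sum_nat_add fun n => posP m (E n))
  intro n
  apply posP_le
  intro C hC hs
  have hCU : C = ⋃ k, C ∩ E (k + n) := by
    rw [← Set.inter_iUnion, ← hDU, Set.inter_eq_left.2 hs]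
  have h1 : HasSum (fun k => m.toFun (C ∩ E (k + n))) (m.toFun (⋃ k, C ∩ E (k + n))) := by
    apply hca
    · exact fun k => 𝒜.inter_mem hC (hEm _)
    · intro i j hij
      exact (hEd (show i + n ≠ j + n by omega)).mono Set.inter_subset_right
        Set.inter_subset_right
    · rwa [← hCU]
  rw [← hCU] at h1
  exact hasSum_le (fun k => le_posP m (𝒜.inter_mem hC (hEm _)) Set.inter_subset_right) h1
    ((summable_nat_add_iff n).2 hsm).hasSum

theorem negM_ca (hca : CountablyAdditive m) : CountablyAdditive (negM m) :=
  fun A hA hd hU => (hca A hA hd hU).neg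

theorem var_nonneg (A : Set Ω) : 0 ≤ var m A :=
  add_nonneg (posP_nonneg m A) (posP_nonneg (negM m) A)

theorem var_mono {A B : Set Ω} (h : A ⊆ B) : var m A ≤ var m B :=
  add_le_add (posP_mono m h) (posP_mono (negM m) h)

theorem var_union {A B : Set Ω} (hA : A ∈ 𝒜.sets) (hB : B ∈ 𝒜.sets) (hd : Disjoint A B) :
    var m (A ∪ B) = var m A + var m B := by
  simp only [var_eq, posP_union _ hA hB hd]; ring

theorem var_tendsto (hσ : IsSigmaAlg 𝒜) (hca : CountablyAdditive m) (D : ℕ → Set Ω)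
    (hD : ∀ n, D n ∈ 𝒜.sets) (hanti : Antitone D) (hemp : ⋂ n, D n = ∅) :
    Tendsto (fun n => var m (D n)) atTop (𝓝 0) := by
  have := (posP_tendsto m hσ hca D hD hanti hemp).add
    (posP_tendsto (negM m) hσ (negM_ca m hca) D hD hanti hemp)
  simpa [var_eq] using this

theorem outer_nonneg (A : Set Ω) : 0 ≤ outer m A := by
  apply Real.sInf_nonneg
  rintro x ⟨B, -, -, rfl⟩
  exact var_nonneg m B

theorem outer_le {A B : Set Ω} (hB : B ∈ 𝒜.sets) (h : A ⊆ B) : outer m A ≤ var m B := by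
  apply csInf_le
  · refine ⟨0, ?_⟩
    rintro x ⟨B, -, -, rfl⟩
    exact var_nonneg m B
  · exact ⟨B, hB, h, rfl⟩

theorem outer_mono {A B : Set Ω} (h : A ⊆ B) : outer m A ≤ outer m B := by
  apply le_csInf
  · exact ⟨_, Set.univ, 𝒜.univ_mem, Set.subset_univ _, rfl⟩
  · rintro x ⟨C, hC, hs, rfl⟩
    exact outer_le m hC (h.trans hs)

open scoped Classical in
theorem indicator_mem_L0 {A : Set Ω} (hA : A ∈ 𝒜.sets) {f : Ω → ℝ} (hf : f ∈ L0 m) :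
    A.indicator f ∈ L0 m := by
  obtain ⟨s, hs, hc⟩ := hf
  refine ⟨fun n => A.indicator (s n), ?_, ?_⟩
  · intro n
    refine ⟨((hs n).1.insert 0).subset ?_, ?_⟩
    · rintro _ ⟨x, rfl⟩
      by_cases hx : x ∈ A
      · simp [hx]
      · simp [hx]
    · intro r
      have h1 := 𝒜.inter_mem ((hs n).2 r) hA
      by_cases hr : r = 0
      · convert 𝒜.union_mem h1 (𝒜.compl_mem hA) using 1
        ext x
        by_cases hx : x ∈ A <;> simp [hx, hr]
      · convert h1 using 1
        ext x
        by_cases hx : x ∈ A <;> simp [hx, Ne.symm hr]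
  · intro c hc0
    refine squeeze_zero (fun n => outer_nonneg m _) (fun n => outer_mono m ?_) (hc c hc0)
    intro x hx
    by_cases hxA : x ∈ A
    · simpa [hxA] using hx
    · simp [hxA] at hx
      linarith

theorem smul_mem_L0 (a : ℝ) (ha : a ≠ 0) {f : Ω → ℝ} (hf : f ∈ L0 m) : a • f ∈ L0 m := by
  obtain ⟨s, hs, hc⟩ := hf
  refine ⟨fun n => a • s n, ?_, ?_⟩
  · intro n
    refine ⟨((hs n).1.image (fun y => a * y)).subset ?_, ?_⟩
    · rintro _ ⟨x, rfl⟩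
      exact ⟨s n x, ⟨x, rfl⟩, by simp⟩
    · intro r
      convert (hs n).2 (r / a) using 1
      ext x
      simp only [Set.mem_preimage, Set.mem_singleton_iff, Pi.smul_apply, smul_eq_mul]
      rw [eq_div_iff ha, mul_comm]
  · intro c hc0
    have ha' := abs_pos.2 ha
    convert hc (c / |a|) (div_pos hc0 ha') using 3
    ext x
    simp only [Set.mem_setOf_eq, Pi.smul_apply, smul_eq_mul]
    rw [← mul_sub, abs_mul, div_lt_iff₀ ha', mul_comm]

theorem zero_mem_L0 : (0 : Ω → ℝ) ∈ L0 m := by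
  classical
  refine ⟨fun _ => 0, ?_, ?_⟩
  · intro n
    refine ⟨(Set.finite_singleton (0:ℝ)).subset ?_, ?_⟩
    · rintro _ ⟨x, rfl⟩
      simp
    · intro r
      by_cases hr : r = 0
      · convert 𝒜.univ_mem
        ext x; simp [hr]
      · convert 𝒜.empty_mem
        ext x; simp [Ne.symm hr]
  · intro c hc
    refine squeeze_zero (fun n => outer_nonneg m _)
      (g := fun _ => var m ∅) (fun n => outer_le m 𝒜.empty_mem ?_) ?_
    · intro x hx
      simp at hx
      linarith
    · have : var m ∅ = 0 := by
        have := var_union m 𝒜.empty_mem 𝒜.empty_mem (Set.disjoint_empty _)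
        simp at this
        exact this
      rw [this]
      exact tendsto_const_nhds

theorem exists_small (φ : (Ω → ℝ) → ℝ) (hlin : LinearOnL0 m φ) (hcont : ContinuousOnL0 m φ) :
    ∃ δ > 0, ∀ A ∈ 𝒜.sets, var m A < δ → ∀ f ∈ L0 m, φ (A.indicator f) = 0 := by
  obtain ⟨δ, hδ, h⟩ := hcont 0 (zero_mem_L0 m) 1 one_pos
  have hz : φ 0 = 0 := by
    have := hlin.2 0 0 (zero_mem_L0 m)
    simpa using this
  refine ⟨δ, hδ, fun A hA hv f hf => ?_⟩
  have hg := indicator_mem_L0 m hA hf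
  by_contra hne
  set g := A.indicator f with hgdef
  have ha : 2 / φ g ≠ 0 := div_ne_zero two_ne_zero hne
  have h1 := h _ (smul_mem_L0 m _ ha hg) ?_
  · rw [hlin.2 _ _ hg, hz, div_mul_cancel₀ _ hne] at h1
    norm_num at h1
  · have h2 : dL0 m ((2 / φ g) • g) 0 ≤ (δ - var m A) / 2 +
        outer m {ω | (δ - var m A) / 2 ≤ |((2 / φ g) • g) ω - (0 : Ω → ℝ) ω|} := by
      apply csInf_le
      · refine ⟨0, ?_⟩
        rintro x ⟨c, hc, rfl⟩
        exact add_nonneg hc.le (outer_nonneg m _)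
      · exact ⟨_, by linarith, rfl⟩
    have h3 : outer m {ω | (δ - var m A) / 2 ≤ |((2 / φ g) • g) ω - (0 : Ω → ℝ) ω|}
        ≤ var m A := by
      apply outer_le m hA
      intro x hx
      by_contra hxA
      simp [hgdef, hxA] at hx
      linarith
    linarith

end P

/-- Corollary 6 (Mukherjee and Summers): if `𝒜` is a σ-algebra, `λ` is countably additive
and `φ` is a continuous linear functional on `L⁰(λ)`, then either `φ = 0` or `λ` has an
atom. -/
theorem stmt_3 {Ω : Type*} {𝒜 : SetAlg Ω} (hσ : IsSigmaAlg 𝒜)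
    (lam : BAMeasure 𝒜) (hca : CountablyAdditive lam)
    (φ : (Ω → ℝ) → ℝ) (hlin : LinearOnL0 lam φ) (hcont : ContinuousOnL0 lam φ) :
    (∀ f ∈ L0 lam, φ f = 0) ∨
    ∃ A ∈ 𝒜.sets, 0 < var lam A ∧ ∀ B ∈ 𝒜.sets, B ⊆ A →
      var lam B = 0 ∨ var lam (A \ B) = 0 := by
  obtain ⟨δ, hδ, hsmall⟩ := exists_small lam φ hlin hcont
  by_cases hall : ∀ f ∈ L0 lam, φ f = 0
  · exact Or.inl hall
  right
  push Not at hall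
  obtain ⟨f, hf, hne⟩ := hall
  -- the bad sets
  let Bad := {C : Set Ω // C ∈ 𝒜.sets ∧ φ (C.indicator f) ≠ 0}
  have hsplit : ∀ B ∈ 𝒜.sets, ∀ C ∈ 𝒜.sets, C ⊆ B →
      φ (B.indicator f) = φ (C.indicator f) + φ ((B \ C).indicator f) := by
    intro B hB C hC hCB
    rw [← hlin.1 _ (indicator_mem_L0 lam hC hf) _
      (indicator_mem_L0 lam (𝒜.diff_mem hB hC) hf)]
    congr 1
    have h0 := Set.indicator_union_of_disjoint
      (Set.disjoint_sdiff_right : Disjoint C (B \ C)) f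
    rw [Set.union_sdiff_cancel hCB] at h0
    exact h0
  have hstep : ∀ (n : ℕ) (B : Bad), ∃ B' : Bad, B'.1 ⊆ B.1 ∧
      ∀ C : Bad, C.1 ⊆ B.1 → var lam B'.1 ≤ var lam C.1 + 1 / ((n : ℝ) + 1) := by
    intro n B
    let S : Set ℝ := {x | ∃ C : Bad, C.1 ⊆ B.1 ∧ x = var lam C.1}
    have hS : S.Nonempty := ⟨_, B, subset_rfl, rfl⟩
    have hSb : BddBelow S := ⟨0, by rintro x ⟨C, -, rfl⟩; exact var_nonneg lam _⟩
    obtain ⟨x, ⟨B', hB', rfl⟩, hx⟩ :=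
      exists_lt_of_csInf_lt hS (lt_add_of_pos_right (sInf S) (Nat.one_div_pos_of_nat (n := n)))
    refine ⟨B', hB', fun C hC => ?_⟩
    have : sInf S ≤ var lam C.1 := csInf_le hSb ⟨C, hC, rfl⟩
    linarith
  choose next hnext1 hnext2 using hstep
  let B0 : Bad := ⟨Set.univ, 𝒜.univ_mem, by simpa using hne⟩
  let seq : ℕ → Bad := fun n => Nat.rec B0 next n
  have hseq : ∀ n, seq (n + 1) = next n (seq n) := fun n => rfl
  have hanti : Antitone fun n => (seq n).1 :=
    antitone_nat_of_succ_le fun n => by rw [hseq]; exact hnext1 n _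
  set B : Set Ω := ⋂ n, (seq n).1 with hBdef
  have hB : B ∈ 𝒜.sets := by
    have := 𝒜.compl_mem (hσ (fun n => (seq n).1ᶜ) fun n => 𝒜.compl_mem (seq n).2.1)
    rw [Set.compl_iUnion] at this
    simpa [hBdef] using this
  have hBs : ∀ n, B ⊆ (seq n).1 := fun n => Set.iInter_subset _ n
  have hlim := var_tendsto lam hσ hca (fun n => (seq n).1 \ B)
    (fun n => 𝒜.diff_mem (seq n).2.1 hB)
    (fun i j hij => Set.diff_subset_diff_left (hanti hij))
    (by
      ext x
      simp only [Set.mem_iInter, Set.mem_diff, Set.mem_empty_iff_false, iff_false]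
      intro hx
      exact (hx 0).2 (Set.mem_iInter.2 fun n => (hx n).1))
  obtain ⟨n, hn⟩ := (hlim.eventually (gt_mem_nhds hδ)).exists
  have hBbad : φ (B.indicator f) ≠ 0 := by
    have h1 := hsplit _ (seq n).2.1 B hB (hBs n)
    rw [hsmall _ (𝒜.diff_mem (seq n).2.1 hB) hn f hf, add_zero] at h1
    rw [← h1]
    exact (seq n).2.2
  have hmin : ∀ C ∈ 𝒜.sets, C ⊆ B → φ (C.indicator f) ≠ 0 → var lam (B \ C) = 0 := by
    intro C hC hCB hCbad
    have h1 : var lam B ≤ var lam C := by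
      refine le_of_forall_pos_le_add fun ε hε => ?_
      obtain ⟨k, hk⟩ := exists_nat_one_div_lt hε
      have h2 := hnext2 k (seq k) ⟨C, hC, hCbad⟩ (hCB.trans (hBs k))
      have h3 := var_mono lam (hBs (k + 1))
      rw [hseq] at h3
      simp only at h2
      linarith
    have h2 := var_union lam hC (𝒜.diff_mem hB hC) Set.disjoint_sdiff_right
    rw [Set.union_diff_cancel hCB] at h2
    linarith [var_nonneg lam (B \ C)]
  refine ⟨B, hB, ?_, ?_⟩
  · by_contra h
    exact hBbad (hsmall B hB (by linarith) f hf)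
  · intro C hC hCB
    by_cases hCbad : φ (C.indicator f) = 0
    · left
      have h1 := hsplit B hB C hC hCB
      rw [hCbad, zero_add] at h1
      have h2 := hmin (B \ C) (𝒜.diff_mem hB hC) Set.diff_subset (by rwa [← h1])
      rwa [Set.diff_diff_cancel_left hCB] at h2
    · exact Or.inr (hmin C hC hCB hCbad)

end FA
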